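/- arXiv:math/9301208 — 2 statements merged into one kernel-verified Lean document; each statement's English description precedes it below -/
import Mathlib

section
/- Let A, B ⊆ C. Then 𝒫(A,B) is σ-linked in the following strong sense: there exists a countable family of subsets F_n (n ∈ ℕ) of 𝒫(A,B) whose union is all of 𝒫(A,B), such that for any two conditions p, q belonging to the same F_n, the union of the graphs of p and q is the graph of a condition; in particular p and q are compatible. -/
/-- `D_η = {σ : ℕ → Bool | ∀ n, σ (2n) = η n}` in Cantor space. -/
def DsetB (η : ℕ → Bool) : Set (ℕ → Bool) := {σ | ∀ n, σ (2 * n) = η n}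

/-- `b_η` is the element of `D_η` with `b_η (2n) = η n` and `b_η (2n+1) = 1`. -/
def bfun (η : ℕ → Bool) : ℕ → Bool := fun n => if n % 2 = 0 then η (n / 2) else true

/-- `S_η`: elements of `D_η` with `σ (2n+1) = 0` for all but finitely many `n`,
together with the extra point `b_η`. -/
def SsetB (η : ℕ → Bool) : Set (ℕ → Bool) :=
  {σ | σ ∈ DsetB η ∧ {n | σ (2 * n + 1) ≠ false}.Finite} ∪ {bfun η}

/-- `C = ⋃_η S_η`. -/
def CsetB : Set (ℕ → Bool) := ⋃ η : ℕ → Bool, SsetB η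

/-- `E_i (σ, τ)` holds iff `σ` and `τ` agree below `i`. -/
def Erel (i : ℕ) (σ τ : ℕ → Bool) : Prop := ∀ k < i, σ k = τ k

/-- A set `M ⊆ C` is amenable if whenever some element of `S_η` agrees with a finite
sequence `s` on all indices below `n`, some element of `M ∩ S_η` does as well. -/
def AmenableB (M : Set (ℕ → Bool)) : Prop :=
  ∀ (η : ℕ → Bool) (n : ℕ) (s : Fin n → Bool),
    (∃ ν ∈ SsetB η, ∀ k : Fin n, ν k = s k) →
    ∃ ν ∈ M ∩ SsetB η, ∀ k : Fin n, ν k = s k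

/-- A condition in the forcing `𝒫(A,B)`: a finite partial injection from `A` to `B`
(given by its graph) preserving each `E_i` and each predicate `S_η`. -/
structure CondB (A B : Set (ℕ → Bool)) where
  graph : Set ((ℕ → Bool) × (ℕ → Bool))
  finite : graph.Finite
  dom_sub : ∀ ⦃x y⦄, (x, y) ∈ graph → x ∈ A
  ran_sub : ∀ ⦃x y⦄, (x, y) ∈ graph → y ∈ B
  functional : ∀ ⦃x y y'⦄, (x, y) ∈ graph → (x, y') ∈ graph → y = y'
  injective : ∀ ⦃x x' y⦄, (x, y) ∈ graph → (x', y) ∈ graph → x = x'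
  epres : ∀ ⦃x y x' y'⦄ (i : ℕ), (x, y) ∈ graph → (x', y') ∈ graph →
    (Erel i x x' ↔ Erel i y y')
  spres : ∀ ⦃x y⦄ (η : ℕ → Bool), (x, y) ∈ graph → (x ∈ SsetB η ↔ y ∈ SsetB η)

/-- Two conditions are compatible if some condition extends both. -/
def CompatibleB {A B : Set (ℕ → Bool)} (p q : CondB A B) : Prop :=
  ∃ r : CondB A B, p.graph ⊆ r.graph ∧ q.graph ⊆ r.graph

theorem even_of_memS {η x : ℕ → Bool} (h : x ∈ SsetB η) (n : ℕ) : x (2 * n) = η n := by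
  rcases h with h | h
  · exact h.1 n
  · rw [Set.mem_singleton_iff] at h
    subst h
    simp [bfun]

/-- the odd part -/
def oddB (x : ℕ → Bool) : ℕ → Bool := fun n => x (2 * n + 1)

/-- possible odd parts -/
def OddSet : Set (ℕ → Bool) := {f | {n | f n = true}.Finite} ∪ {fun _ => true}

theorem oddSet_countable : OddSet.Countable := by
  refine Set.Countable.union ?_ (Set.countable_singleton _)
  have h : {s : Set ℕ | s.Finite}.Countable := Set.Countable.setOf_finite
  refine Set.Countable.preimage_of_injOn (f := fun f : ℕ → Bool => {n | f n = true}) h ?_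
  intro f _ g _ hfg
  funext n
  have : n ∈ {n | f n = true} ↔ n ∈ {n | g n = true} := by
    have h2 : {n | f n = true} = {n | g n = true} := hfg
    rw [h2]
  exact Bool.eq_iff_iff.2 this

theorem oddB_mem {x : ℕ → Bool} (h : x ∈ CsetB) : oddB x ∈ OddSet := by
  obtain ⟨η, h⟩ := Set.mem_iUnion.1 h
  rcases h with h | h
  · left
    simpa [oddB] using h.2
  · right
    rw [Set.mem_singleton_iff] at h
    subst h
    funext n
    have : (2 * n + 1) % 2 = 1 := by omega
    simp [bfun, oddB, this]

theorem Erel.symm' {i : ℕ} {x y : ℕ → Bool} (h : Erel i x y) : Erel i y x :=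
  fun k hk => (h k hk).symm

theorem Erel.trans' {i : ℕ} {x y z : ℕ → Bool} (h : Erel i x y) (h' : Erel i y z) : Erel i x z :=
  fun k hk => (h k hk).trans (h' k hk)

theorem Erel.mono' {i j : ℕ} {x y : ℕ → Bool} (h : Erel i x y) (hj : j ≤ i) : Erel j x y :=
  fun k hk => h k (lt_of_lt_of_le hk hj)

theorem erel_all {x y : ℕ → Bool} (h : ∀ i, Erel i x y) : x = y :=
  funext fun k => h (k + 1) k (Nat.lt_succ_self k)

theorem erel_of_even_odd {x x' y y' : ℕ → Bool} (hx : ∀ n, x (2 * n) = y (2 * n))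
    (hx' : ∀ n, x' (2 * n) = y' (2 * n)) (ho : oddB y = oddB y') {i : ℕ}
    (h : Erel i x x') : Erel i y y' := by
  intro k hk
  rcases Nat.even_or_odd' k with ⟨m, rfl | rfl⟩
  · rw [← hx, ← hx']
    exact h _ hk
  · exact congrFun ho m

/-- the data of a pair -/
def dataB (n : ℕ) (u : (ℕ → Bool) × (ℕ → Bool)) :
    (List Bool × List Bool) × ((ℕ → Bool) × (ℕ → Bool)) :=
  (((List.range n).map u.1, (List.range n).map u.2), (oddB u.1, oddB u.2))

theorem erel_of_map {n : ℕ} {x y : ℕ → Bool} (h : (List.range n).map x = (List.range n).map y) :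
    Erel n x y := fun k hk => List.map_inj_left.1 h k (List.mem_range.2 hk)

theorem exists_sep {A B : Set (ℕ → Bool)} (p : CondB A B) :
    ∃ n, ∀ u ∈ p.graph, ∀ v ∈ p.graph, Erel n u.1 v.1 → u = v := by
  have key : ∀ w : ((ℕ → Bool) × (ℕ → Bool)) × ((ℕ → Bool) × (ℕ → Bool)), ∃ n,
      w.1 ∈ p.graph → w.2 ∈ p.graph → Erel n w.1.1 w.2.1 → w.1 = w.2 := by
    rintro ⟨⟨x, y⟩, ⟨x', y'⟩⟩
    by_cases h : x = x'
    · subst h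
      refine ⟨0, fun h1 h2 _ => ?_⟩
      have := p.functional h1 h2
      simp [this]
    · have : ∃ n, ¬ Erel n x x' := by
        by_contra hc
        push Not at hc
        exact h (erel_all hc)
      obtain ⟨n, hn⟩ := this
      exact ⟨n, fun _ _ h3 => absurd h3 hn⟩
  choose N hN using key
  obtain ⟨M, hM⟩ := ((p.finite.prod p.finite).image N).bddAbove
  refine ⟨M, fun u hu v hv h => hN (u, v) hu hv (h.mono' (hM ⟨(u, v), ⟨hu, hv⟩, rfl⟩))⟩

theorem cross {A B : Set (ℕ → Bool)} (hAC : A ⊆ CsetB) {p q : CondB A B} {n : ℕ}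
    (hq : ∀ u ∈ q.graph, ∀ v ∈ q.graph, Erel n u.1 v.1 → u = v)
    (hd : dataB n '' p.graph = dataB n '' q.graph) {x y x' y' : ℕ → Bool} (i : ℕ)
    (h : (x, y) ∈ p.graph) (h' : (x', y') ∈ q.graph) : Erel i x x' ↔ Erel i y y' := by
  have hm : dataB n (x, y) ∈ dataB n '' q.graph := hd ▸ Set.mem_image_of_mem _ h
  obtain ⟨⟨x0, y0⟩, h0, he⟩ := hm
  simp only [dataB, Prod.mk.injEq] at he
  obtain ⟨⟨ex, ey⟩, ox, oy⟩ := he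
  replace ex := erel_of_map ex
  replace ey := erel_of_map ey
  have ev : ∀ {r : CondB A B} {x y}, (x, y) ∈ r.graph → ∀ n, x (2 * n) = y (2 * n) := by
    intro r x y hr n
    obtain ⟨η, hη⟩ := Set.mem_iUnion.1 (hAC (r.dom_sub hr))
    rw [even_of_memS hη, even_of_memS ((r.spres η hr).1 hη)]
  by_cases hc : Erel n x0 x'
  · have := hq _ h0 _ h' hc
    simp only [Prod.mk.injEq] at this
    obtain ⟨rfl, rfl⟩ := this
    exact ⟨erel_of_even_odd (ev h) (ev h') oy.symm,
      erel_of_even_odd (fun n => (ev h n).symm) (fun n => (ev h' n).symm) ox.symm⟩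
  · have hc' : ¬ Erel n y0 y' := fun hh => hc ((q.epres n h0 h').2 hh)
    rcases le_total i n with hi | hi
    · have a := ex.mono' hi
      have b := ey.mono' hi
      have e := q.epres i h0 h'
      exact ⟨fun t => b.symm'.trans' (e.1 (a.trans' t)), fun t => a.symm'.trans' (e.2 (b.trans' t))⟩
    · exact ⟨fun t => absurd (ex.trans' (t.mono' hi)) hc,
        fun t => absurd (ey.trans' (t.mono' hi)) hc'⟩

theorem exists_union {A B : Set (ℕ → Bool)} (hAC : A ⊆ CsetB) {p q : CondB A B} {n : ℕ}
    (hq : ∀ u ∈ q.graph, ∀ v ∈ q.graph, Erel n u.1 v.1 → u = v)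
    (hd : dataB n '' p.graph = dataB n '' q.graph) :
    ∃ r : CondB A B, r.graph = p.graph ∪ q.graph := by
  have E : ∀ ⦃x y x' y'⦄ (i : ℕ), (x, y) ∈ p.graph ∪ q.graph → (x', y') ∈ p.graph ∪ q.graph →
      (Erel i x x' ↔ Erel i y y') := by
    intro x y x' y' i h h'
    rcases h with h | h <;> rcases h' with h' | h'
    · exact p.epres i h h'
    · exact cross hAC hq hd i h h'
    · have := cross hAC hq hd i h' h
      exact ⟨fun t => (this.1 t.symm').symm', fun t => (this.2 t.symm').symm'⟩
    · exact q.epres i h h'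
  refine ⟨⟨p.graph ∪ q.graph, p.finite.union q.finite, ?_, ?_, ?_, ?_, E, ?_⟩, rfl⟩
  · rintro x y (h | h)
    exacts [p.dom_sub h, q.dom_sub h]
  · rintro x y (h | h)
    exacts [p.ran_sub h, q.ran_sub h]
  · intro x y y' h h'
    exact erel_all fun i => (E i h h').1 fun _ _ => rfl
  · intro x x' y h h'
    exact erel_all fun i => (E i h h').2 fun _ _ => rfl
  · rintro x y η (h | h)
    exacts [p.spres η h, q.spres η h]

/-- For `A, B ⊆ C`, the forcing `𝒫(A,B)` is σ-linked: it is a countable union of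
sets `F n` such that the union of the graphs of any two conditions in the same `F n`
is again the graph of a condition; in particular they are compatible. -/
theorem condB_sigma_linked (A B : Set (ℕ → Bool)) (hAC : A ⊆ CsetB) (hBC : B ⊆ CsetB) :
    ∃ F : ℕ → Set (CondB A B),
      (∀ p : CondB A B, ∃ n, p ∈ F n) ∧
      ∀ n : ℕ, ∀ p ∈ F n, ∀ q ∈ F n,
        (∃ r : CondB A B, r.graph = p.graph ∪ q.graph) ∧ CompatibleB p q := by
  choose N hN using fun p : CondB A B => exists_sep p
  let Φ : CondB A B → ℕ × Set ((List Bool × List Bool) × ((ℕ → Bool) × (ℕ → Bool))) :=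
    fun p => (N p, dataB (N p) '' p.graph)
  have hT : ((Set.univ : Set (List Bool × List Bool)) ×ˢ (OddSet ×ˢ OddSet)).Countable :=
    Set.countable_univ.prod (oddSet_countable.prod oddSet_countable)
  have hcount : (Set.range Φ).Countable := by
    refine ((Set.countable_univ (α := ℕ)).prod (Set.countable_setOf_finite_subset hT)).mono ?_
    rintro _ ⟨p, rfl⟩
    refine ⟨Set.mem_univ _, p.finite.image _, ?_⟩
    rintro _ ⟨⟨x, y⟩, h, rfl⟩
    exact ⟨Set.mem_univ _, oddB_mem (hAC (p.dom_sub h)), oddB_mem (hBC (p.ran_sub h))⟩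
  obtain ⟨g, hg⟩ := Set.countable_iff_exists_injOn.1 hcount
  refine ⟨fun n => {p | g (Φ p) = n}, fun p => ⟨_, rfl⟩, ?_⟩
  intro n p hp q hq
  have he : Φ p = Φ q := hg ⟨p, rfl⟩ ⟨q, rfl⟩ (hp.trans hq.symm)
  have h1 : N p = N q := congrArg Prod.fst he
  have h2 : dataB (N p) '' p.graph = dataB (N q) '' q.graph := congrArg Prod.snd he
  rw [h1] at h2
  obtain ⟨r, hr⟩ := exists_union hAC (hN q) h2
  exact ⟨⟨r, hr⟩, r, hr ▸ Set.subset_union_left, hr ▸ Set.subset_union_right⟩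
end

section
/- Let A, B ⊆ C be amenable. For every condition p ∈ 𝒫(A,B) and every a ∈ A not in the domain of p, there exists a condition q ∈ 𝒫(A,B) extending p whose domain is the domain of p together with a. -/
theorem SsetB_even {η σ : ℕ → Bool} (h : σ ∈ SsetB η) (n : ℕ) : σ (2 * n) = η n := by
  rcases h with h | h
  · exact h.1 n
  · have : σ = bfun η := h
    subst this
    simp [bfun]

theorem SsetB_unique {η θ σ : ℕ → Bool} (h : σ ∈ SsetB η) (h' : σ ∈ SsetB θ) : η = θ := by
  funext n
  rw [← SsetB_even h n, SsetB_even h' n]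

theorem Erel_symm {i : ℕ} {σ τ : ℕ → Bool} (h : Erel i σ τ) : Erel i τ σ :=
  fun k hk => (h k hk).symm

theorem Erel_trans {i : ℕ} {σ τ ρ : ℕ → Bool} (h : Erel i σ τ) (h' : Erel i τ ρ) :
    Erel i σ ρ := fun k hk => (h k hk).trans (h' k hk)

theorem Erel_mono {i j : ℕ} (hij : i ≤ j) {σ τ : ℕ → Bool} (h : Erel j σ τ) : Erel i σ τ :=
  fun k hk => h k (lt_of_lt_of_le hk hij)

theorem Erel_succ {i : ℕ} {σ τ : ℕ → Bool} (h : Erel i σ τ) (h' : σ i = τ i) :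
    Erel (i + 1) σ τ := by
  intro k hk
  rcases Nat.lt_succ_iff_lt_or_eq.1 hk with h1 | h1
  · exact h k h1
  · rw [h1]; exact h'

theorem Erel_all {σ τ : ℕ → Bool} (h : ∀ i, Erel i σ τ) : σ = τ :=
  funext fun k => h (k + 1) k (Nat.lt_succ_self k)

theorem exists_image {A B : Set (ℕ → Bool)} (hAC : A ⊆ CsetB)
    (hB : AmenableB B) (p : CondB A B) (a η : ℕ → Bool) (haη : a ∈ SsetB η)
    (hnd : ∀ y, (a, y) ∉ p.graph) :
    ∃ b ∈ B ∩ SsetB η, ∀ x y, (x, y) ∈ p.graph → ∀ i, (Erel i a x ↔ Erel i b y) := by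
  rcases p.graph.eq_empty_or_nonempty with he | hne
  · obtain ⟨b, hb, -⟩ := hB η 0 (fun k => k.elim0) ⟨a, haη, fun k => k.elim0⟩
    refine ⟨b, hb, fun x y h => ?_⟩
    rw [he] at h
    exact h.elim
  have hdiff : ∀ z : (ℕ → Bool) × (ℕ → Bool), ∃ m, z ∈ p.graph →
      Erel m a z.1 ∧ a m ≠ z.1 m := by
    intro z
    by_cases hz : z ∈ p.graph
    · have hex : ∃ m, a m ≠ z.1 m := by
        by_contra hcon
        push Not at hcon
        have : a = z.1 := funext hcon
        apply hnd z.2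
        rw [this]
        exact hz
      refine ⟨Nat.find hex, fun _ => ⟨fun k hk => ?_, Nat.find_spec hex⟩⟩
      exact not_not.1 (Nat.find_min hex hk)
    · exact ⟨0, fun h => (hz h).elim⟩
  choose f hf using hdiff
  obtain ⟨⟨x0, y0⟩, hz0, hmax⟩ := Set.exists_max_image p.graph f p.finite hne
  obtain ⟨hm1, hm2⟩ := hf _ hz0
  generalize hm : f (x0, y0) = m at hm1 hm2 hmax
  simp only at hm1 hm2
  obtain ⟨θ, hθ⟩ := Set.mem_iUnion.1 (hAC (p.dom_sub hz0))
  have hθy := (p.spres θ hz0).1 hθ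
  have hev : ∀ n, y0 (2 * n) = x0 (2 * n) := fun n => by
    rw [SsetB_even hθ, SsetB_even hθy]
  -- the target string
  let ν : ℕ → Bool := fun k => if k < m then y0 k else if k = m then !(y0 m)
    else if k % 2 = 0 then η (k / 2) else false
  have hν : ν ∈ SsetB η := by
    left
    constructor
    · intro n
      have ha := SsetB_even haη n
      by_cases h1 : 2 * n < m
      · have := hm1 _ h1
        simp [ν, h1, hev, ← this, ha]
      · by_cases h2 : 2 * n = m
        · have hh := hev n
          rw [h2] at ha hh
          simp only [ν, h2, lt_irrefl, if_false, if_true, hh, ← ha]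
          revert hm2
          cases a m <;> cases x0 m <;> simp
        · simp [ν, h1, h2]
    · apply (Set.finite_Iic m).subset
      intro n hn
      by_contra hc
      have hc' : m < n := by simpa using hc
      apply hn
      have h1 : ¬ (2 * n + 1 < m) := by omega
      have h2 : ¬ (2 * n + 1 = m) := by omega
      have h3 : ¬ ((2 * n + 1) % 2 = 0) := by omega
      simp only [ν, h1, h2, h3, if_false]
  obtain ⟨b, hb, hbν⟩ := hB η (m + 1) (fun k => ν k) ⟨ν, hν, fun k => rfl⟩
  have hb1 : Erel m b y0 := by
    intro k hk
    have := hbν ⟨k, by omega⟩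
    simpa [ν, hk] using this
  have hb2 : b m ≠ y0 m := by
    have := hbν ⟨m, by omega⟩
    simp [ν] at this
    simp [this]
  refine ⟨b, hb, fun x y hxy i => ?_⟩
  by_cases hi : i ≤ m
  · have e1 := Erel_mono hi hm1
    have e2 := Erel_mono hi hb1
    have e3 := p.epres i hz0 hxy
    exact ⟨fun h => Erel_trans e2 (e3.1 (Erel_trans (Erel_symm e1) h)),
      fun h => Erel_trans e1 (e3.2 (Erel_trans (Erel_symm e2) h))⟩
  · have hxm : Erel m a x → a m ≠ x m := by
      intro h hh
      obtain ⟨-, h2⟩ := hf _ hxy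
      have h3 : f (x, y) ≤ m := hmax _ hxy
      exact h2 (Erel_succ h hh _ (by omega))
    have him : m + 1 ≤ i := by omega
    constructor
    · intro h
      exact (hxm (Erel_mono (by omega) h) (h m (by omega))).elim
    · intro h
      exfalso
      have h1 : Erel m x0 x :=
        (p.epres m hz0 hxy).2 (Erel_trans (Erel_symm hb1) (Erel_mono (by omega) h))
      have h2 := hxm (Erel_trans hm1 h1)
      have h3 : x0 m = x m := by
        revert hm2 h2
        cases a m <;> cases x0 m <;> cases x m <;> simp
      have h4 := (p.epres (m + 1) hz0 hxy).1 (Erel_succ h1 h3) m (by omega)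
      exact hb2 ((h m (by omega)).trans h4.symm)

/-- For amenable `A, B ⊆ C`, every condition can be extended to have any prescribed
element `a ∈ A` in its domain. -/
theorem condB_extend (A B : Set (ℕ → Bool)) (hAC : A ⊆ CsetB) (hBC : B ⊆ CsetB)
    (hA : AmenableB A) (hB : AmenableB B) (p : CondB A B) (a : ℕ → Bool) (ha : a ∈ A)
    (hnd : ∀ y, (a, y) ∉ p.graph) :
    ∃ q : CondB A B, p.graph ⊆ q.graph ∧
      ∀ x, (∃ y, (x, y) ∈ q.graph) ↔ (∃ y, (x, y) ∈ p.graph) ∨ x = a := by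
  obtain ⟨η, hη⟩ := Set.mem_iUnion.1 (hAC ha)
  obtain ⟨b, ⟨hbB, hbη⟩, hb⟩ := exists_image hAC hB p a η hη hnd
  have hmem : ∀ x y, (x, y) ∈ insert (a, b) p.graph ↔ (x = a ∧ y = b) ∨ (x, y) ∈ p.graph := by
    intro x y
    simp [Set.mem_insert_iff, Prod.ext_iff]
  have hbn : ∀ x, (x, b) ∉ p.graph := by
    intro x hx
    have : a = x := Erel_all fun i => (hb x b hx i).2 fun _ _ => rfl
    exact hnd b (this ▸ hx)
  refine ⟨⟨insert (a, b) p.graph, p.finite.insert _, ?_, ?_, ?_, ?_, ?_, ?_⟩,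
    Set.subset_insert _ _, ?_⟩
  · intro x y h
    rcases (hmem _ _).1 h with ⟨rfl, rfl⟩ | h
    · exact ha
    · exact p.dom_sub h
  · intro x y h
    rcases (hmem _ _).1 h with ⟨rfl, rfl⟩ | h
    · exact hbB
    · exact p.ran_sub h
  · intro x y y' h h'
    rcases (hmem _ _).1 h with ⟨rfl, rfl⟩ | h <;> rcases (hmem _ _).1 h' with ⟨h1, h2⟩ | h'
    · exact h2.symm
    · exact (hnd _ h').elim
    · exact (hnd _ (h1 ▸ h)).elim
    · exact p.functional h h'
  · intro x x' y h h'
    rcases (hmem _ _).1 h with ⟨rfl, rfl⟩ | h <;> rcases (hmem _ _).1 h' with ⟨h1, h2⟩ | h'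
    · exact h1.symm
    · exact (hbn _ h').elim
    · exact (hbn _ (h2 ▸ h)).elim
    · exact p.injective h h'
  · intro x y x' y' i h h'
    rcases (hmem _ _).1 h with ⟨rfl, rfl⟩ | h <;> rcases (hmem _ _).1 h' with ⟨h1, h2⟩ | h'
    · rw [h1, h2]
      exact ⟨fun _ _ _ => rfl, fun _ _ _ => rfl⟩
    · exact hb _ _ h' i
    · rw [h1, h2]
      exact ⟨fun e => Erel_symm ((hb _ _ h i).1 (Erel_symm e)),
        fun e => Erel_symm ((hb _ _ h i).2 (Erel_symm e))⟩
    · exact p.epres i h h'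
  · intro x y θ h
    rcases (hmem _ _).1 h with ⟨rfl, rfl⟩ | h
    · exact ⟨fun e => SsetB_unique hη e ▸ hbη, fun e => SsetB_unique hbη e ▸ hη⟩
    · exact p.spres θ h
  · intro x
    constructor
    · rintro ⟨y, h⟩
      rcases (hmem _ _).1 h with ⟨h1, -⟩ | h
      · exact Or.inr h1
      · exact Or.inl ⟨y, h⟩
    · rintro (⟨y, h⟩ | h)
      · exact ⟨y, (hmem _ _).2 (Or.inr h)⟩
      · exact ⟨b, (hmem _ _).2 (Or.inl ⟨h, rfl⟩)⟩
end
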